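/- arXiv:1401.6252 — 2 statements merged into one kernel-verified Lean document; each statement's English description precedes it below -/
import Mathlib

section
/- Let k be a positive integer and let C be a self-dual Z4-code of length 24k+22 with minimum Lee weight 8k+8. Then every binary self-dual code containing the residue code C^(1) is an s-extremal self-dual code with minimum Hamming weight equal to 4k+4 or 4k+6. -/
open Finset

namespace Z4Note

variable {ι : Type*} [Fintype ι]

/-- Hamming weight of a binary vector. -/
def hWt (x : ι → ZMod 2) : ℕ := (Finset.univ.filter fun i => x i ≠ 0).card

/-- Lee value of an element of `ZMod 4`:  0 ↦ 0, 1 ↦ 1, 2 ↦ 2, 3 ↦ 1. -/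
def leeVal (a : ZMod 4) : ℕ := min a.val (4 - a.val)

/-- Lee weight `n₁(x) + 2 n₂(x) + n₃(x)`. -/
def leeWt (x : ι → ZMod 4) : ℕ := ∑ i, leeVal (x i)

/-- Euclidean weight `n₁(x) + 4 n₂(x) + n₃(x)`. -/
def eucWt (x : ι → ZMod 4) : ℕ := ∑ i, (leeVal (x i)) ^ 2

/-- Number of coordinates of `x` equal to `a`. -/
def nCount (a : ZMod 4) (x : ι → ZMod 4) : ℕ := (Finset.univ.filter fun i => x i = a).card

/-- Dual of a `ZMod 4`-code (as a set), w.r.t. the standard inner product. -/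
def dualZ4 (C : Set (ι → ZMod 4)) : Set (ι → ZMod 4) :=
  {x | ∀ y ∈ C, ∑ i, x i * y i = 0}

/-- Dual of a binary code (as a set), w.r.t. the standard inner product. -/
def dual2 (C : Set (ι → ZMod 2)) : Set (ι → ZMod 2) :=
  {x | ∀ y ∈ C, ∑ i, x i * y i = 0}

/-- A `ZMod 4`-code is self-dual if it equals its dual. -/
def SelfDualZ4 (C : Submodule (ZMod 4) (ι → ZMod 4)) : Prop :=
  (C : Set (ι → ZMod 4)) = dualZ4 (C : Set (ι → ZMod 4))

/-- A binary code is self-dual if it equals its dual. -/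
def SelfDual2 (D : Submodule (ZMod 2) (ι → ZMod 2)) : Prop :=
  (D : Set (ι → ZMod 2)) = dual2 (D : Set (ι → ZMod 2))

/-- Coordinatewise reduction modulo 2. -/
def res2 (x : ι → ZMod 4) : ι → ZMod 2 :=
  fun i => ZMod.castHom (by norm_num : (2:ℕ) ∣ 4) (ZMod 2) (x i)

/-- The residue code `C⁽¹⁾ = {c mod 2 : c ∈ C}`. -/
def residue (C : Set (ι → ZMod 4)) : Set (ι → ZMod 2) := res2 '' C

/-- Minimum Lee weight among nonzero codewords. -/
noncomputable def minLee (C : Set (ι → ZMod 4)) : ℕ := sInf {d | ∃ x ∈ C, x ≠ 0 ∧ leeWt x = d}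

/-- Minimum Euclidean weight among nonzero codewords. -/
noncomputable def minEuc (C : Set (ι → ZMod 4)) : ℕ := sInf {d | ∃ x ∈ C, x ≠ 0 ∧ eucWt x = d}

/-- Minimum Hamming weight among nonzero codewords of a binary code. -/
noncomputable def minHam (C : Set (ι → ZMod 2)) : ℕ := sInf {d | ∃ x ∈ C, x ≠ 0 ∧ hWt x = d}

/-- A binary code is doubly even if all weights are divisible by 4. -/
def DoublyEven (C : Set (ι → ZMod 2)) : Prop := ∀ x ∈ C, 4 ∣ hWt x

/-- A binary code is singly even if some codeword has weight not divisible by 4. -/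
def SinglyEven (C : Set (ι → ZMod 2)) : Prop := ∃ x ∈ C, ¬ 4 ∣ hWt x

/-- A self-dual `ZMod 4`-code is Type II if all Euclidean weights are divisible by 8. -/
def TypeII (C : Set (ι → ZMod 4)) : Prop := ∀ x ∈ C, 8 ∣ eucWt x

/-- The doubly even subcode of a binary code. -/
def evenSubcode (D : Set (ι → ZMod 2)) : Set (ι → ZMod 2) := {x ∈ D | 4 ∣ hWt x}

/-- The shadow `S = D₀^⊥ \ D` of a binary code. -/
def shadow (D : Set (ι → ZMod 2)) : Set (ι → ZMod 2) := dual2 (evenSubcode D) \ D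

/-- A binary singly even self-dual code is s-extremal if equality holds in the
Bachoc–Gaborit bound relating the minimum weight of the code and of its shadow. -/
def SExtremal (D : Submodule (ZMod 2) (ι → ZMod 2)) : Prop :=
  SelfDual2 D ∧ SinglyEven (D : Set (ι → ZMod 2)) ∧
  ((¬ (Fintype.card ι % 24 = 22 ∧
        minHam (D : Set (ι → ZMod 2)) = 4 * (Fintype.card ι / 24) + 6)) →
      minHam (shadow (D : Set (ι → ZMod 2))) + 2 * minHam (D : Set (ι → ZMod 2)) =
        Fintype.card ι / 2 + 4) ∧
  ((Fintype.card ι % 24 = 22 ∧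
        minHam (D : Set (ι → ZMod 2)) = 4 * (Fintype.card ι / 24) + 6) →
      minHam (shadow (D : Set (ι → ZMod 2))) + 2 * minHam (D : Set (ι → ZMod 2)) =
        Fintype.card ι / 2 + 8)

/-- Equivalence of `ZMod 4`-codes: coordinate permutation together with sign changes. -/
def Z4Equiv (C C' : Set (ι → ZMod 4)) : Prop :=
  ∃ σ : Equiv.Perm ι, ∃ ε : ι → ZMod 4, (∀ i, ε i = 1 ∨ ε i = -1) ∧
    C' = (fun x => fun i => ε i * x (σ i)) '' C

/-- Covering radius of a binary code. -/
noncomputable def covRad (C : Set (ι → ZMod 2)) : ℕ :=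
  sInf {R | ∀ v : ι → ZMod 2, ∃ c ∈ C, hWt (v - c) ≤ R}

/-- Entry `(i,j)` of the circulant matrix with first row `r`. -/
def circEntry {m : ℕ} (r : Fin m → ZMod 4) (i j : Fin m) : ZMod 4 := r (j - i)

/-- Entry `(i,j)` of the negacirculant matrix with first row `r`. -/
def negaEntry {m : ℕ} (r : Fin m → ZMod 4) (i j : Fin m) : ZMod 4 :=
  if i.val ≤ j.val then r (j - i) else - r (j - i)

/-- The bordered part `B` of the generator matrix of a bordered double circulant code. -/
def bdcB {m : ℕ} (α β γ : ZMod 4) (r : Fin m → ZMod 4) :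
    Fin (m+1) → Fin (m+1) → ZMod 4 :=
  Fin.cases (Fin.cases α fun _ => β) (fun i' => Fin.cases γ fun j' => circEntry r i' j')

/-- Row `i` of the generator matrix `(I | B)` of a bordered double circulant code. -/
def bdcRow {m : ℕ} (α β γ : ZMod 4) (r : Fin m → ZMod 4) (i : Fin (m+1)) :
    (Fin (m+1) ⊕ Fin (m+1)) → ZMod 4 :=
  Sum.elim (fun j => if j = i then 1 else 0) (bdcB α β γ r i)

/-- The bordered double circulant code of length `2(m+1)`. -/
def bdcCode {m : ℕ} (α β γ : ZMod 4) (r : Fin m → ZMod 4) :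
    Submodule (ZMod 4) ((Fin (m+1) ⊕ Fin (m+1)) → ZMod 4) :=
  Submodule.span (ZMod 4) (Set.range (bdcRow α β γ r))

/-- The block matrix `[[A, B], [-Bᵀ, Aᵀ]]` built from negacirculant `A`, `B`. -/
def fourNegaM {n : ℕ} (a b : Fin n → ZMod 4) :
    (Fin n ⊕ Fin n) → (Fin n ⊕ Fin n) → ZMod 4
  | Sum.inl i, Sum.inl j => negaEntry a i j
  | Sum.inl i, Sum.inr j => negaEntry b i j
  | Sum.inr i, Sum.inl j => - negaEntry b j i
  | Sum.inr i, Sum.inr j => negaEntry a j i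

/-- Row `i` of the generator matrix `(I | M)` of a four-negacirculant code. -/
def fourNegaRow {n : ℕ} (a b : Fin n → ZMod 4) (i : Fin n ⊕ Fin n) :
    ((Fin n ⊕ Fin n) ⊕ (Fin n ⊕ Fin n)) → ZMod 4 :=
  Sum.elim (fun j => if j = i then 1 else 0) (fourNegaM a b i)

/-- The four-negacirculant code of length `4n`. -/
def fourNegaCode {n : ℕ} (a b : Fin n → ZMod 4) :
    Submodule (ZMod 4) (((Fin n ⊕ Fin n) ⊕ (Fin n ⊕ Fin n)) → ZMod 4) :=
  Submodule.span (ZMod 4) (Set.range (fourNegaRow a b))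

end Z4Note

/-!
Doubling a binary word orthogonal to the residue code gives a codeword of `C` of twice the weight.
The words of `D` are orthogonal to the residue code, and so are those of its shadow, because residue
words have weight divisible by four. Hence all nonzero weights of `D` and all weights of the shadow
are at least `4k + 4`, and the latter, being congruent to 3 modulo 4, are at least `4k + 7`.

For the upper bounds let `2N` be the length and `P` the weight enumerator of `D`. The MacWilliams
transform on the shadow writes `|D| P` as the sum of `(1 + iX) ^ s (1 - iX) ^ (2N - s)` over the
shadow weights `s`, all congruent to `N` modulo 4. So `F = P / (1 + X²) ^ N` is a Laurent polynomial
in `u = ((1 + iX) / (1 - iX)) ^ 4`, with exponents in `[-j, j]` when the shadow has minimum weight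
at least `N - 4j`, and `u ^ (j + 1) / (u - 1) ^ (2j + 2) dF` then has residue zero at `X = 0`.
If the minimum weight of `D` is at least `2j + 3`, only the constant term of `P` contributes to this
residue, which is a nonzero multiple of the coefficient of `X ^ (2j)` in
`(1 + X²) ^ (-M) (1 - X²) ^ (-2j - 2)` with `M = N - 4j - 3`. If the shadow or the code had a larger
minimum weight than claimed, this would apply with `j = 2k` or `j = 2k + 2` respectively, but for
these values the coefficient is positive.
-/

namespace Z4Note

section Residues

open PowerSeries

variable {K : Type*} [Field K] [CharZero K]

/- In the variable `t = X * φ` this says that `dt / t ^ (r + 2)` has residue zero, multiplied out by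
the power of `X` that makes it a power series. -/
lemma coeff_derivative_X_mul_mul_inv_pow {φ : K⟦X⟧} (hφ : constantCoeff φ ≠ 0) (r : ℕ) :
    coeff (r + 1) (derivative K (X * φ) * φ⁻¹ ^ (r + 2)) = 0 := by
  have hinv : φ * φ⁻¹ = 1 := PowerSeries.mul_inv_cancel φ hφ
  have hsplit : derivative K (X * φ) * φ⁻¹ ^ (r + 2) =
      φ⁻¹ ^ (r + 1) - X * (derivative K φ⁻¹ * φ⁻¹ ^ r) := by
    rw [Derivation.leibniz, derivative_X, derivative_inv', smul_eq_mul, smul_eq_mul]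
    linear_combination φ⁻¹ ^ (r + 1) * hinv
  have hpow : coeff r (derivative K (φ⁻¹ ^ (r + 1))) =
      (r + 1) * coeff r (derivative K φ⁻¹ * φ⁻¹ ^ r) := by
    rw [derivative_pow, ← coeff_C_mul]
    simp only [Nat.cast_add, Nat.cast_one, add_tsub_cancel_right, map_add, map_natCast, map_one]
    ring_nf
  rw [coeff_derivative, mul_comm] at hpow
  rw [hsplit, map_sub, coeff_succ_X_mul,
    mul_left_cancel₀ (Nat.cast_add_one_ne_zero r) hpow, sub_self]

lemma coeff_aeval_mul_derivative_mul_inv_pow {φ : K⟦X⟧} (hφ : constantCoeff φ ≠ 0) {M : ℕ}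
    {p : Polynomial K} (hp : p.natDegree ≤ M) :
    coeff (M + 1) (Polynomial.aeval (X * φ) p * derivative K (X * φ) * φ⁻¹ ^ (M + 2)) = 0 := by
  rw [Polynomial.aeval_eq_sum_range' (Nat.lt_succ_of_le hp), sum_mul, sum_mul, map_sum]
  refine sum_eq_zero fun i hi ↦ ?_
  obtain ⟨r, rfl⟩ := Nat.exists_eq_add_of_le (Nat.lt_succ_iff.mp (mem_range.mp hi))
  have hcancel : (φ * φ⁻¹) ^ i = 1 := by rw [PowerSeries.mul_inv_cancel φ hφ, one_pow]
  have hterm : p.coeff i • (X * φ) ^ i * derivative K (X * φ) * φ⁻¹ ^ (i + r + 2) =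
      p.coeff i • (X ^ i * (derivative K (X * φ) * φ⁻¹ ^ (r + 2))) := by
    rw [smul_mul_assoc, smul_mul_assoc]
    congr 1
    linear_combination (X ^ i * derivative K (X * φ) * φ⁻¹ ^ (r + 2)) * hcancel
  rw [hterm, map_smul, add_assoc, add_comm i, coeff_X_pow_mul,
    coeff_derivative_X_mul_mul_inv_pow hφ, smul_zero]

/- `u ^ (j + 1) * dF` is `du` times a polynomial in `u` of degree at most `M`, hence `du` times a
combination of the powers up to `M` of `t = u - 1`. -/
lemma coeff_derivative_mul_pow_mul_inv_pow {φ u F : K⟦X⟧} (hφ : constantCoeff φ ≠ 0)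
    (hu : u = 1 + X * φ) {j M : ℕ} {p : Polynomial K} (hp : p.natDegree ≤ M)
    (hF : F * u ^ j = Polynomial.aeval u p) :
    coeff (M + 1) (derivative K F * u ^ (j + 1) * φ⁻¹ ^ (M + 2)) = 0 := by
  let q : Polynomial K := Polynomial.X * p.derivative - Polynomial.C (j : K) * p
  have hq : q.natDegree ≤ M := by
    refine Polynomial.natDegree_le_iff_coeff_eq_zero.mpr fun n hn ↦ ?_
    obtain ⟨n, rfl⟩ := Nat.exists_eq_succ_of_ne_zero (Nat.ne_zero_of_lt hn)
    simp [q, Polynomial.coeff_X_mul, Polynomial.coeff_derivative,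
      Polynomial.coeff_eq_zero_of_natDegree_lt (hp.trans_lt hn)]
  have hpow : u * derivative K (u ^ j) = j * u ^ j * derivative K u := by
    rw [derivative_pow]
    cases j with
    | zero => simp
    | succ j => rw [add_tsub_cancel_right]; ring
  have hderiv : derivative K F * u ^ (j + 1) = Polynomial.aeval u q * derivative K u := by
    have h := congrArg (derivative K) hF
    rw [Derivation.leibniz, Derivation.map_aeval, smul_eq_mul, smul_eq_mul, smul_eq_mul] at h
    simp only [q, map_sub, map_mul, Polynomial.aeval_X, map_natCast]
    linear_combination u * h - F * hpow - j * derivative K u * hF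
  have hshift : Polynomial.aeval u q = Polynomial.aeval (X * φ) (Polynomial.taylor 1 q) := by
    rw [Polynomial.taylor_apply, Polynomial.aeval_comp, hu]
    simp [add_comm]
  have hdu : derivative K u = derivative K (X * φ) := by
    rw [hu, map_add, derivative_one, zero_add]
  rw [hderiv, hshift, hdu]
  exact coeff_aeval_mul_derivative_mul_inv_pow hφ ((Polynomial.natDegree_taylor _ _).trans_le hq)

end Residues

section CayleyTransform

open PowerSeries

variable {K : Type*} [Field K] {i : K}

lemma constantCoeff_one_add_X_sq_ne_zero : constantCoeff (1 + X ^ 2 : K⟦X⟧) ≠ 0 := by simp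

lemma constantCoeff_one_sub_X_sq_ne_zero : constantCoeff (1 - X ^ 2 : K⟦X⟧) ≠ 0 := by simp

lemma one_sub_C_mul_X_mul_inv (i : K) : (1 - C i * X) * (1 - C i * X : K⟦X⟧)⁻¹ = 1 :=
  PowerSeries.mul_inv_cancel _ (by simp)

lemma C_mul_C_eq_neg_one (hi : i * i = -1) : (C i * C i : K⟦X⟧) = -1 := by
  rw [← map_mul, hi, map_neg, map_one]

lemma one_add_mul_one_sub_C_mul_X (hi : i * i = -1) :
    (1 + C i * X) * (1 - C i * X) = (1 + X ^ 2 : K⟦X⟧) := by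
  linear_combination -X ^ 2 * C_mul_C_eq_neg_one hi

/-- The factor `φ` for which the fourth power of `(1 + iX) / (1 - iX)` is `1 + X * φ`. -/
noncomputable def cayleyFactor (i : K) : K⟦X⟧ :=
  C (8 * i) * ((1 - X ^ 2) * (1 - C i * X)⁻¹ ^ 4)

lemma cayley_pow_four (hi : i * i = -1) :
    ((1 + C i * X) * (1 - C i * X)⁻¹) ^ 4 = 1 + X * cayleyFactor i := by
  have hpow : ((1 - C i * X : K⟦X⟧) * (1 - C i * X)⁻¹) ^ 4 = 1 := by
    rw [one_sub_C_mul_X_mul_inv, one_pow]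
  have hnum : (1 + C i * X) ^ 4 = (1 - C i * X) ^ 4 + C (8 * i) * X * (1 - X ^ 2) := by
    rw [map_mul, map_ofNat]
    linear_combination (8 * C i * X ^ 3) * C_mul_C_eq_neg_one hi
  rw [mul_pow, hnum, cayleyFactor]
  linear_combination hpow

lemma pow_mul_pow_mul_inv_pow_mul_pow {A : Type*} [CommMonoid A] {v w v' w' : A} (hv : v * v' = 1)
    (hw : w * w' = 1) {N j m s : ℕ} (hsm : s + 4 * j = N + 4 * m) (hs : s ≤ 2 * N) :
    v ^ s * w ^ (2 * N - s) * (v' * w') ^ N * ((v * w') ^ 4) ^ j = ((v * w') ^ 4) ^ m := by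
  have hv_exp : v ^ s * v' ^ N * (v ^ 4) ^ j = (v ^ 4) ^ m := by
    rw [mul_right_comm, ← pow_mul, ← pow_add, hsm, pow_add, mul_right_comm, ← mul_pow, hv, one_pow,
      one_mul, pow_mul]
  have hw_exp : w ^ (2 * N - s) * w' ^ N * (w' ^ 4) ^ j = (w' ^ 4) ^ m := by
    rw [← pow_mul, mul_assoc, ← pow_add, show N + 4 * j = 2 * N - s + 4 * m by lia, pow_add,
      ← mul_assoc, ← mul_pow, hw, one_pow, one_mul, pow_mul]
  calc
    _ = (v ^ s * v' ^ N * (v ^ 4) ^ j) * (w ^ (2 * N - s) * w' ^ N * (w' ^ 4) ^ j) := by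
      simp only [mul_pow, mul_assoc, mul_left_comm]
    _ = _ := by rw [hv_exp, hw_exp, mul_pow, mul_pow]

variable [CharZero K]

lemma constantCoeff_cayleyFactor (hi : i * i = -1) : constantCoeff (cayleyFactor i) ≠ 0 := by
  have : i ≠ 0 := by
    rintro rfl
    simp at hi
  simp [cayleyFactor, this]

lemma cayley_pow_four_mul_cayleyFactor_inv_sq (hi : i * i = -1) :
    ((1 + C i * X) * (1 - C i * X)⁻¹) ^ 4 * (cayleyFactor i)⁻¹ ^ 2 =
      C (-64)⁻¹ * ((1 + X ^ 2) ^ 4 * (1 - X ^ 2)⁻¹ ^ 2) := by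
  have hsq : (1 - X ^ 2 : K⟦X⟧) * (1 - X ^ 2)⁻¹ = 1 :=
    PowerSeries.mul_inv_cancel _ constantCoeff_one_sub_X_sq_ne_zero
  have hpow : ((1 - C i * X : K⟦X⟧) * (1 - C i * X)⁻¹) ^ 4 = 1 := by
    rw [one_sub_C_mul_X_mul_inv, one_pow]
  have hconst : (C (8 * i) * C (-i / 8) : K⟦X⟧) = 1 := by
    rw [← map_mul, show 8 * i * (-i / 8) = 1 by linear_combination -hi, map_one]
  have hinv : (cayleyFactor i)⁻¹ = C (-i / 8) * ((1 - X ^ 2)⁻¹ * (1 - C i * X) ^ 4) := by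
    rw [PowerSeries.inv_eq_iff_mul_eq_one (constantCoeff_cayleyFactor hi), cayleyFactor]
    calc
      _ = C (8 * i) * C (-i / 8) * ((1 - X ^ 2) * (1 - X ^ 2)⁻¹) *
          ((1 - C i * X) * (1 - C i * X)⁻¹) ^ 4 := by ring
      _ = 1 := by rw [hconst, hsq, hpow, one_mul, one_mul]
  calc
    _ = C (-i / 8) ^ 2 * (((1 + C i * X) * (1 - C i * X)) ^ 4 * (1 - X ^ 2)⁻¹ ^ 2) *
        ((1 - C i * X) * (1 - C i * X)⁻¹) ^ 4 := by rw [hinv]; ring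
    _ = _ := by
      rw [hpow, mul_one, one_add_mul_one_sub_C_mul_X hi, ← map_pow,
        show (-i / 8) ^ 2 = (-64)⁻¹ by linear_combination hi / 64]

lemma coeff_derivative_mul_pow_eq_zero {ψ : K⟦X⟧} (hi : i * i = -1) {α : Type*} (S : Finset α)
    (wt : α → ℕ) {N j : ℕ} (hwt : ∀ a ∈ S, ∃ m ≤ 2 * j, wt a + 4 * j = N + 4 * m)
    (hN : 4 * j ≤ N)
    (hψ : ψ = ∑ a ∈ S, (1 + C i * X) ^ wt a * (1 - C i * X) ^ (2 * N - wt a)) :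
    coeff (2 * j + 1) (derivative K (ψ * (1 + X ^ 2)⁻¹ ^ N) *
      ((1 + X ^ 2) ^ 4 * (1 - X ^ 2)⁻¹ ^ 2) ^ (j + 1)) = 0 := by
  choose! m hm_le hm using hwt
  set u : K⟦X⟧ := ((1 + C i * X) * (1 - C i * X)⁻¹) ^ 4
  set p : Polynomial K := ∑ a ∈ S, Polynomial.X ^ m a with hp
  have hF : ψ * (1 + X ^ 2)⁻¹ ^ N * u ^ j = Polynomial.aeval u p := by
    have hv : (1 + C i * X : K⟦X⟧) * (1 + C i * X)⁻¹ = 1 :=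
      PowerSeries.mul_inv_cancel _ (by simp)
    rw [← one_add_mul_one_sub_C_mul_X hi, PowerSeries.mul_inv_rev,
      mul_comm (1 - C i * X)⁻¹ (1 + C i * X)⁻¹, hψ, sum_mul, sum_mul, hp, map_sum]
    refine sum_congr rfl fun a ha ↦ ?_
    rw [map_pow, Polynomial.aeval_X]
    refine pow_mul_pow_mul_inv_pow_mul_pow hv (one_sub_C_mul_X_mul_inv i) (hm a ha) ?_
    have := hm a ha
    have := hm_le a ha
    lia
  have hp_deg : p.natDegree ≤ 2 * j :=
    Polynomial.natDegree_sum_le_of_forall_le _ _ fun a ha ↦ by simpa using hm_le a ha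
  have hres := coeff_derivative_mul_pow_mul_inv_pow (constantCoeff_cayleyFactor hi)
    (cayley_pow_four hi) hp_deg hF
  have hinv : u ^ (j + 1) * (cayleyFactor i)⁻¹ ^ (2 * j + 2) = C ((-64)⁻¹ ^ (j + 1)) *
      ((1 + X ^ 2) ^ 4 * (1 - X ^ 2)⁻¹ ^ 2) ^ (j + 1) := by
    rw [show 2 * j + 2 = 2 * (j + 1) by ring, pow_mul, ← mul_pow,
      cayley_pow_four_mul_cayleyFactor_inv_sq hi, mul_pow, map_pow]
  rw [mul_assoc, hinv, mul_left_comm, coeff_C_mul] at hres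
  exact (mul_eq_zero.mp hres).resolve_left (pow_ne_zero _ (by norm_num))

end CayleyTransform

section EnumeratorExpansion

open PowerSeries

variable {K : Type*} [Field K]

lemma X_pow_dvd_derivative {F : K⟦X⟧} {n : ℕ} (h : X ^ (n + 1) ∣ F) : X ^ n ∣ derivative K F := by
  rw [X_pow_dvd_iff] at h ⊢
  intro m hm
  rw [coeff_derivative, h (m + 1) (by lia), zero_mul]

lemma derivative_one_add_X_sq_inv_pow (N : ℕ) :
    derivative K ((1 + X ^ 2)⁻¹ ^ N) = C (-2 * N : K) * (X * (1 + X ^ 2)⁻¹ ^ (N + 1)) := by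
  have hderiv : derivative K (1 + X ^ 2 : K⟦X⟧)⁻¹ = -(1 + X ^ 2)⁻¹ ^ 2 * (2 * X) := by
    rw [derivative_inv', map_add, derivative_one, derivative_pow, derivative_X]
    simp
  cases N with
  | zero => simp
  | succ N =>
    rw [derivative_pow, hderiv, map_mul, map_neg, map_ofNat, map_natCast, add_tsub_cancel_right]
    ring

lemma one_add_X_sq_inv_pow_mul_pow (M j : ℕ) :
    (1 + X ^ 2 : K⟦X⟧)⁻¹ ^ (4 * (j + 1) + M) * ((1 + X ^ 2) ^ 4 * (1 - X ^ 2)⁻¹ ^ 2) ^ (j + 1) =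
      (1 + X ^ 2)⁻¹ ^ M * (1 - X ^ 2)⁻¹ ^ (2 * j + 2) := by
  have hpow : ((1 + X ^ 2 : K⟦X⟧)⁻¹ * (1 + X ^ 2)) ^ (4 * (j + 1)) = 1 := by
    rw [PowerSeries.inv_mul_cancel _ constantCoeff_one_add_X_sq_ne_zero, one_pow]
  generalize (1 + X ^ 2 : K⟦X⟧) = a at hpow ⊢
  rw [mul_pow] at hpow
  linear_combination a⁻¹ ^ M * (1 - X ^ 2)⁻¹ ^ (2 * j + 2) * hpow

lemma coeff_derivative_mul_one_add_X_sq_inv_pow {P : K⟦X⟧} {j M N : ℕ} (hN : N = 4 * j + 3 + M)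
    (hP : X ^ (2 * j + 3) ∣ P - 1) :
    coeff (2 * j + 1) (derivative K (P * (1 + X ^ 2)⁻¹ ^ N) *
      ((1 + X ^ 2) ^ 4 * (1 - X ^ 2)⁻¹ ^ 2) ^ (j + 1)) =
    (-2 * N : K) * coeff (2 * j) ((1 + X ^ 2)⁻¹ ^ M * (1 - X ^ 2)⁻¹ ^ (2 * j + 2) : K⟦X⟧) := by
  obtain ⟨T, hT⟩ := X_pow_dvd_derivative (hP.mul_right ((1 + X ^ 2)⁻¹ ^ N))
  rw [sub_mul, one_mul, map_sub, sub_eq_iff_eq_add', derivative_one_add_X_sq_inv_pow] at hT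
  rw [hT, add_mul, map_add, mul_assoc, mul_assoc, mul_assoc, coeff_C_mul, coeff_succ_X_mul,
    coeff_X_pow_mul', if_neg (by lia), add_zero, show N + 1 = 4 * (j + 1) + M by lia,
    one_add_X_sq_inv_pow_mul_pow]

lemma coeff_inv_pow_mul_inv_pow_eq_zero_of_sum_eq [CharZero K] {i c : K} (hi : i * i = -1)
    (hc : c ≠ 0) {P : K⟦X⟧} {α : Type*} (S : Finset α) (wt : α → ℕ) {j M N : ℕ}
    (hN : N = 4 * j + 3 + M) (hP : X ^ (2 * j + 3) ∣ P - 1)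
    (hwt : ∀ a ∈ S, ∃ m ≤ 2 * j, wt a + 4 * j = N + 4 * m)
    (hsum : C c * P = ∑ a ∈ S, (1 + C i * X) ^ wt a * (1 - C i * X) ^ (2 * N - wt a)) :
    coeff (2 * j) ((1 + X ^ 2)⁻¹ ^ M * (1 - X ^ 2)⁻¹ ^ (2 * j + 2) : K⟦X⟧) = 0 := by
  have h := coeff_derivative_mul_pow_eq_zero hi S wt hwt (by lia) hsum
  rw [mul_assoc, ← smul_eq_C_mul, Derivation.map_smul, smul_mul_assoc, map_smul, smul_eq_mul,
    coeff_derivative_mul_one_add_X_sq_inv_pow hN hP] at h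
  have hN0 : (N : K) ≠ 0 := Nat.cast_ne_zero.mpr (by lia)
  simpa [hc, hN0] using h

end EnumeratorExpansion

section Positivity

open PowerSeries

variable {K : Type*} [Field K]

lemma one_sub_X_pow_inv_eq_expand {p : ℕ} (hp : p ≠ 0) :
    (1 - X ^ p : K⟦X⟧)⁻¹ = expand p hp (PowerSeries.mk 1) := by
  have h := congrArg (expand p hp) (mk_one_mul_one_sub_eq_one K)
  rw [map_mul, map_sub, map_one, expand_X] at h
  exact (PowerSeries.inv_eq_iff_mul_eq_one (by simp [hp])).mpr h

lemma coeff_mk_one_pow_mul_map_ne_zero [CharZero K] {B : ℕ⟦X⟧} (hB : constantCoeff B ≠ 0)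
    (r n : ℕ) :
    coeff n ((PowerSeries.mk 1 : K⟦X⟧) ^ (r + 1) * PowerSeries.map (Nat.castRingHom K) B) ≠ 0 := by
  have hmk : (PowerSeries.mk 1 : K⟦X⟧) ^ (r + 1) =
      PowerSeries.map (Nat.castRingHom K) (PowerSeries.mk fun n ↦ (r + n).choose r) := by
    rw [mk_one_pow_eq_mk_choose_add]
    ext n
    simp
  rw [hmk, ← map_mul, coeff_map, eq_natCast, Nat.cast_ne_zero, coeff_mul]
  refine (sum_pos' (fun _ _ ↦ Nat.zero_le _) ⟨(n, 0), by simp, ?_⟩).ne'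
  rw [coeff_mk, coeff_zero_eq_constantCoeff_apply]
  exact Nat.mul_pos (Nat.choose_pos (by lia)) (Nat.pos_of_ne_zero hB)

/- The part of `(1 + ε X²)⁶` in powers of `X⁴` has the coefficients 1, 15, 15, 1, whatever the sign
`ε`; the rest does not meet exponents divisible by 4. -/
lemma coeff_one_sub_X_pow_four_inv_pow_mul_ne_zero [CharZero K] {ε : K} (hε : ε ^ 2 = 1)
    (r n : ℕ) :
    coeff (4 * n) ((1 - X ^ 4)⁻¹ ^ (r + 1) * (1 + C ε * X ^ 2) ^ 6) ≠ 0 := by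
  set A : K⟦X⟧ := PowerSeries.mk 1 ^ (r + 1) with hA
  let B : ℕ⟦X⟧ := 1 + 15 * X + 15 * X ^ 2 + X ^ 3
  have hC : (C ε : K⟦X⟧) ^ 2 = 1 := by rw [← map_pow, hε, map_one]
  have hsplit : (1 - X ^ 4)⁻¹ ^ (r + 1) * (1 + C ε * X ^ 2) ^ 6 =
      expand 4 four_ne_zero (A * PowerSeries.map (Nat.castRingHom K) B) +
        X ^ 2 * (C ε * expand 4 four_ne_zero (A * (6 + 20 * X + 6 * X ^ 2))) := by
    rw [one_sub_X_pow_inv_eq_expand four_ne_zero, ← map_pow, ← hA]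
    simp only [B, map_add, map_mul, map_pow, map_one, map_ofNat, PowerSeries.map_X, expand_X]
    linear_combination expand 4 four_ne_zero A * (15 * X ^ 4 + 20 * X ^ 6 * C ε +
      15 * X ^ 8 * (C ε ^ 2 + 1) + 6 * X ^ 10 * C ε * (C ε ^ 2 + 1) +
      X ^ 12 * (C ε ^ 4 + C ε ^ 2 + 1)) * hC
  have hrest : coeff (4 * n) (X ^ 2 * (C ε *
      expand 4 four_ne_zero (A * (6 + 20 * X + 6 * X ^ 2)))) = 0 := by
    rw [coeff_X_pow_mul']
    split_ifs
    · rw [coeff_C_mul, coeff_expand_of_not_dvd _ _ _ (by lia), mul_zero]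
    · rfl
  rw [hsplit, map_add, hrest, add_zero, coeff_expand_mul]
  exact coeff_mk_one_pow_mul_map_ne_zero (by simp [B]) r n

lemma inv_pow_add_mul_inv_pow {φ ψ : K⟦X⟧} (hφ : constantCoeff φ ≠ 0) (r a : ℕ) :
    ψ⁻¹ ^ (r + a) * φ⁻¹ ^ r = (φ * ψ)⁻¹ ^ (r + a) * φ ^ a := by
  have h : (φ⁻¹ * φ) ^ a = 1 := by rw [PowerSeries.inv_mul_cancel φ hφ, one_pow]
  rw [PowerSeries.mul_inv_rev]
  linear_combination -ψ⁻¹ ^ (r + a) * φ⁻¹ ^ r * h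

lemma one_sub_X_sq_mul_one_add_X_sq : (1 - X ^ 2) * (1 + X ^ 2) = (1 - X ^ 4 : K⟦X⟧) := by ring

lemma coeff_one_add_inv_pow_add_six_mul_ne_zero [CharZero K] (r n : ℕ) :
    coeff (4 * n) ((1 + X ^ 2)⁻¹ ^ (r + 6) * (1 - X ^ 2)⁻¹ ^ r : K⟦X⟧) ≠ 0 := by
  have h := coeff_one_sub_X_pow_four_inv_pow_mul_ne_zero (ε := (-1 : K)) (by norm_num) (r + 5) n
  rw [inv_pow_add_mul_inv_pow constantCoeff_one_sub_X_sq_ne_zero, one_sub_X_sq_mul_one_add_X_sq]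
  simpa [← sub_eq_add_neg] using h

lemma coeff_one_add_inv_pow_mul_add_six_ne_zero [CharZero K] (r n : ℕ) :
    coeff (4 * n) ((1 + X ^ 2)⁻¹ ^ r * (1 - X ^ 2)⁻¹ ^ (r + 6) : K⟦X⟧) ≠ 0 := by
  have h := coeff_one_sub_X_pow_four_inv_pow_mul_ne_zero (ε := (1 : K)) (by norm_num) (r + 5) n
  rw [mul_comm ((1 + X ^ 2)⁻¹ ^ r), inv_pow_add_mul_inv_pow constantCoeff_one_add_X_sq_ne_zero,
    mul_comm (1 + X ^ 2), one_sub_X_sq_mul_one_add_X_sq]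
  simpa using h

end Positivity

lemma eq_one_of_ne_zero : ∀ {a : ZMod 2}, a ≠ 0 → a = 1 := by decide

section BinaryCodes

variable {ι : Type*} [Fintype ι]

lemma hWt_eq_hammingNorm (x : ι → ZMod 2) : hWt x = hammingNorm x := rfl

lemma hWt_eq_sum_val (x : ι → ZMod 2) : hWt x = ∑ i, (x i).val := by
  have val_eq_ite : ∀ a : ZMod 2, a.val = if a ≠ 0 then 1 else 0 := by decide
  simp only [hWt, card_filter, val_eq_ite]

lemma hWt_le_card (x : ι → ZMod 2) : hWt x ≤ Fintype.card ι :=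
  hammingNorm_le_card_fintype

lemma hWt_one : hWt (1 : ι → ZMod 2) = Fintype.card ι := by
  simp [hWt]

lemma hWt_add (x y : ι → ZMod 2) : hWt (x + y) + 2 * hWt (x * y) = hWt x + hWt y := by
  have val_add : ∀ a b : ZMod 2, (a + b).val + 2 * (a * b).val = a.val + b.val := by decide
  simp only [hWt_eq_sum_val, mul_sum, ← sum_add_distrib, Pi.add_apply, Pi.mul_apply, val_add]

lemma hWt_add_one (x : ι → ZMod 2) : hWt (x + 1) + hWt x = Fintype.card ι := by
  have h := hWt_add x 1
  rw [mul_one, hWt_one] at h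
  lia

lemma natCast_hWt_mul (x y : ι → ZMod 2) : (hWt (x * y) : ZMod 2) = x ⬝ᵥ y := by
  simp [hWt_eq_sum_val, dotProduct]

lemma natCast_hWt (x : ι → ZMod 2) : (hWt x : ZMod 2) = x ⬝ᵥ x := by
  have mul_self : ∀ a : ZMod 2, a * a = a := by decide
  rw [← natCast_hWt_mul, show x * x = x from funext fun i ↦ mul_self (x i)]

section SelfDual

variable {D : Submodule (ZMod 2) (ι → ZMod 2)} {x y : ι → ZMod 2}

lemma SelfDual2.mem_iff (hD : SelfDual2 D) : x ∈ D ↔ ∀ y ∈ D, x ⬝ᵥ y = 0 :=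
  Set.ext_iff.mp hD x

lemma SelfDual2.two_dvd_hWt (hD : SelfDual2 D) (hx : x ∈ D) : 2 ∣ hWt x := by
  rw [← ZMod.natCast_eq_zero_iff, natCast_hWt, hD.mem_iff.mp hx x hx]

lemma SelfDual2.two_dvd_hWt_mul (hD : SelfDual2 D) (hx : x ∈ D) (hy : y ∈ D) :
    2 ∣ hWt (x * y) := by
  rw [← ZMod.natCast_eq_zero_iff, natCast_hWt_mul, hD.mem_iff.mp hx y hy]

lemma SelfDual2.one_mem (hD : SelfDual2 D) : 1 ∈ D :=
  hD.mem_iff.mpr fun y hy ↦ by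
    rw [← natCast_hWt_mul, one_mul, ZMod.natCast_eq_zero_iff]
    exact hD.two_dvd_hWt hy

lemma SelfDual2.singlyEven_of_not_four_dvd_card (hD : SelfDual2 D) (hn : ¬ 4 ∣ Fintype.card ι) :
    SinglyEven (D : Set (ι → ZMod 2)) :=
  ⟨1, hD.one_mem, by rwa [hWt_one]⟩

lemma SelfDual2.natCast_half_hWt_add (hD : SelfDual2 D) (hx : x ∈ D) (hy : y ∈ D) :
    ((hWt (x + y) / 2 : ℕ) : ZMod 2) = (hWt x / 2 : ℕ) + (hWt y / 2 : ℕ) := by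
  have := hWt_add x y
  have := hD.two_dvd_hWt hx
  have := hD.two_dvd_hWt hy
  have := hD.two_dvd_hWt_mul hx hy
  rw [← Nat.cast_add, ZMod.natCast_eq_natCast_iff']
  lia

lemma natCast_half_hWt_eq_zero (hx : 4 ∣ hWt x) : ((hWt x / 2 : ℕ) : ZMod 2) = 0 := by
  rw [ZMod.natCast_eq_zero_iff]
  lia

lemma SelfDual2.natCast_half_hWt_eq_one (hD : SelfDual2 D) (hx : x ∈ D) (h4 : ¬ 4 ∣ hWt x) :
    ((hWt x / 2 : ℕ) : ZMod 2) = 1 := by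
  have := hD.two_dvd_hWt hx
  rw [← Nat.cast_one, ZMod.natCast_eq_natCast_iff']
  lia

lemma SelfDual2.mem_shadow_iff (hD : SelfDual2 D) (hS : SinglyEven (D : Set (ι → ZMod 2))) :
    x ∈ shadow (D : Set (ι → ZMod 2)) ↔ ∀ c ∈ D, x ⬝ᵥ c = (hWt c / 2 : ℕ) := by
  constructor
  · rintro ⟨hx_dual, hx_notMem⟩ c hc
    by_cases hc4 : 4 ∣ hWt c
    · rw [natCast_half_hWt_eq_zero hc4]
      exact hx_dual c ⟨hc, hc4⟩
    obtain ⟨b, hb, hxb⟩ : ∃ b ∈ D, x ⬝ᵥ b ≠ 0 := by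
      have h := mt hD.mem_iff.mpr hx_notMem
      push Not at h
      exact h
    have hb4 : ¬ 4 ∣ hWt b := fun h ↦ hxb (hx_dual b ⟨hb, h⟩)
    have hcb4 : 4 ∣ hWt (c + b) := by
      by_contra h
      have hadd := hD.natCast_half_hWt_add hc hb
      rw [hD.natCast_half_hWt_eq_one (D.add_mem hc hb) h, hD.natCast_half_hWt_eq_one hc hc4,
        hD.natCast_half_hWt_eq_one hb hb4] at hadd
      exact absurd hadd (by decide)
    have hxcb : x ⬝ᵥ (c + b) = 0 := hx_dual (c + b) ⟨D.add_mem hc hb, hcb4⟩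
    rw [dotProduct_add, CharTwo.add_eq_zero] at hxcb
    rw [hD.natCast_half_hWt_eq_one hc hc4, hxcb, eq_one_of_ne_zero hxb]
  · intro hx
    refine ⟨fun c hc ↦ (hx c hc.1).trans (natCast_half_hWt_eq_zero hc.2), fun hxD ↦ ?_⟩
    obtain ⟨c, hc, hc4⟩ := hS
    have h := hx c hc
    rw [hD.mem_iff.mp hxD c hc, hD.natCast_half_hWt_eq_one hc hc4] at h
    exact zero_ne_one h

lemma SelfDual2.shadow_nonempty (hD : SelfDual2 D) (hS : SinglyEven (D : Set (ι → ZMod 2))) :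
    (shadow (D : Set (ι → ZMod 2))).Nonempty := by
  classical
  let halfWeight : D →+ ZMod 2 :=
    { toFun := fun c ↦ (hWt (c : ι → ZMod 2) / 2 : ℕ)
      map_zero' := by simp [hWt_eq_hammingNorm]
      map_add' := fun c d ↦ hD.natCast_half_hWt_add c.2 d.2 }
  obtain ⟨f, hf⟩ := (halfWeight.toZModLinearMap 2).exists_extend
  refine ⟨(dotProductEquiv (ZMod 2) ι).symm f, (hD.mem_shadow_iff hS).mpr fun c hc ↦ ?_⟩
  rw [← dotProductEquiv_apply_apply, LinearEquiv.apply_symm_apply]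
  exact LinearMap.congr_fun hf ⟨c, hc⟩

section Shadow

variable {s : ι → ZMod 2}

lemma SelfDual2.add_mem_shadow (hD : SelfDual2 D) (hS : SinglyEven (D : Set (ι → ZMod 2)))
    (hs : s ∈ shadow (D : Set (ι → ZMod 2))) (hx : x ∈ D) :
    s + x ∈ shadow (D : Set (ι → ZMod 2)) := by
  rw [hD.mem_shadow_iff hS] at hs ⊢
  intro c hc
  rw [add_dotProduct, hD.mem_iff.mp hx c hc, add_zero, hs c hc]

lemma SelfDual2.hWt_shadow_add_modEq (hD : SelfDual2 D) (hS : SinglyEven (D : Set (ι → ZMod 2)))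
    (hs : s ∈ shadow (D : Set (ι → ZMod 2))) (hx : x ∈ D) : hWt (s + x) ≡ hWt s [MOD 4] := by
  have hadd := hWt_add s x
  have heven := hD.two_dvd_hWt hx
  have hmul : hWt (s * x) % 2 = hWt x / 2 % 2 := by
    rw [← ZMod.natCast_eq_natCast_iff', natCast_hWt_mul]
    exact (hD.mem_shadow_iff hS).mp hs x hx
  rw [Nat.ModEq]
  lia

end Shadow

end SelfDual

section MacWilliams

lemma addChar_map_sum {α A M : Type*} [AddCommMonoid A] [CommMonoid M] (ψ : AddChar A M)
    (f : α → A) (t : Finset α) : ψ (∑ a ∈ t, f a) = ∏ a ∈ t, ψ (f a) :=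
  map_prod ψ.toMonoidHom (fun a ↦ Multiplicative.ofAdd (f a)) t

variable {R : Type*} [CommRing R]

variable (R) in
/-- The additive character `a ↦ (-1) ^ a` of `ZMod 2` with values in `R`. It carries the signs in
the MacWilliams transform. -/
def signChar : AddChar (ZMod 2) R :=
  AddChar.zmodChar 2 (ζ := -1) (by norm_num)

lemma signChar_natCast (n : ℕ) : signChar R n = (-1) ^ n :=
  AddChar.zmodChar_apply' _ n

lemma signChar_one : signChar R 1 = -1 := by
  simpa using signChar_natCast (R := R) 1

lemma one_sub_pow_hWt_mul_one_add_pow [DecidableEq ι] (z : R) (x : ι → ZMod 2) :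
    (1 - z) ^ hWt x * (1 + z) ^ (Fintype.card ι - hWt x) =
      ∑ y : ι → ZMod 2, signChar R (x ⬝ᵥ y) * z ^ hWt y := by
  have hcard : #{i | ¬ x i ≠ 0} = Fintype.card ι - hWt x := by
    rw [hWt, ← card_univ, ← card_filter_add_card_filter_not (s := univ) (fun i ↦ x i ≠ 0),
      add_tsub_cancel_left]
  have huniv : (univ : Finset (ZMod 2)) = {0, 1} := by decide
  have hfactor (a : ZMod 2) :
      (if a ≠ 0 then 1 - z else 1 + z) = ∑ b : ZMod 2, signChar R (a * b) * z ^ b.val := by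
    rw [huniv, sum_pair zero_ne_one]
    by_cases ha : a = 0
    · simp [ha, ZMod.val_one]
    · simp [eq_one_of_ne_zero ha, signChar_one, sub_eq_add_neg, ZMod.val_one]
  calc
    _ = ∏ i, if x i ≠ 0 then 1 - z else 1 + z := by
      rw [prod_ite, prod_const, prod_const, hcard, hWt]
    _ = ∑ y : ι → ZMod 2, ∏ i, signChar R (x i * y i) * z ^ (y i).val := by
      rw [prod_congr rfl fun i _ ↦ hfactor (x i), Fintype.prod_sum]
    _ = _ := by
      simp only [prod_mul_distrib, prod_pow_eq_pow_sum, ← hWt_eq_sum_val, dotProduct,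
        addChar_map_sum]

section Coset

variable [IsDomain R] [CharZero R] {D : Submodule (ZMod 2) (ι → ZMod 2)} [Fintype D]

open Classical in
lemma sum_signChar_dotProduct (x : ι → ZMod 2) :
    ∑ d : D, signChar R (d ⬝ᵥ x) =
      if x ∈ dual2 (D : Set (ι → ZMod 2)) then (Fintype.card D : R) else 0 := by
  split_ifs with hx
  · have hone (d : D) : signChar R (d ⬝ᵥ x) = 1 := by
      rw [dotProduct_comm, show x ⬝ᵥ d = 0 from hx d d.2, AddChar.map_zero_eq_one]
    simp [hone]
  · obtain ⟨y, hy, hxy⟩ : ∃ y ∈ D, x ⬝ᵥ y ≠ 0 := by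
      simpa [dual2, dotProduct] using hx
    let dotRight : D →+ ZMod 2 :=
      AddMonoidHom.mk' (fun d ↦ d ⬝ᵥ x) fun d e ↦ add_dotProduct (d : ι → ZMod 2) e x
    refine (AddChar.sum_eq_zero_iff_ne_zero
      (ψ := (signChar R).compAddMonoidHom dotRight)).mpr (AddChar.ne_zero_iff.mpr ⟨⟨y, hy⟩, ?_⟩)
    rw [dotProduct_comm] at hxy
    change signChar R (y ⬝ᵥ x) ≠ 1
    rw [eq_one_of_ne_zero hxy, signChar_one]
    norm_num

open Classical in
lemma sum_coset_one_sub_pow_mul_one_add_pow (s : ι → ZMod 2) (z : R) :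
    ∑ d : D, (1 - z) ^ hWt (s + d.1) * (1 + z) ^ (Fintype.card ι - hWt (s + d.1)) =
      Fintype.card D * ∑ x with x ∈ dual2 (D : Set (ι → ZMod 2)),
        signChar R (s ⬝ᵥ x) * z ^ hWt x := by
  simp only [one_sub_pow_hWt_mul_one_add_pow, add_dotProduct, AddChar.map_add_eq_mul]
  rw [sum_comm, sum_filter, mul_sum]
  refine sum_congr rfl fun x _ ↦ ?_
  rw [sum_congr rfl fun (d : D) _ ↦
    show _ = signChar R (d ⬝ᵥ x) * (signChar R (s ⬝ᵥ x) * z ^ hWt x) by ring,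
    ← sum_mul, sum_signChar_dotProduct, ite_mul, mul_ite, zero_mul, mul_zero]

/- For `c` in `D` the sign attached to `s ⬝ᵥ c` is `I ^ hWt c`, which is what turns the variable
`-I * y` of the transform back into `y`. -/
lemma SelfDual2.card_mul_sum_pow_hWt {I y : R} (hI : I * I = -1) (hD : SelfDual2 D)
    (hS : SinglyEven (D : Set (ι → ZMod 2))) {s : ι → ZMod 2}
    (hs : s ∈ shadow (D : Set (ι → ZMod 2))) :
    Fintype.card D * ∑ c : D, y ^ hWt c.1 =
      ∑ d : D, (1 + I * y) ^ hWt (s + d.1) * (1 - I * y) ^ (Fintype.card ι - hWt (s + d.1)) := by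
  classical
  have hterm (c : D) : signChar R (s ⬝ᵥ c) * (-(I * y)) ^ hWt c.1 =
      y ^ hWt c.1 := by
    obtain ⟨m, hm⟩ := hD.two_dvd_hWt c.2
    have hsq : (-(I * y)) ^ 2 = -1 * y ^ 2 := by linear_combination y ^ 2 * hI
    rw [(hD.mem_shadow_iff hS).mp hs c c.2, signChar_natCast, hm, pow_mul, hsq, mul_pow,
      Nat.mul_div_cancel_left m two_pos, ← mul_assoc, ← mul_pow, pow_mul]
    simp
  have h := sum_coset_one_sub_pow_mul_one_add_pow (D := D) s (-(I * y))
  rw [sum_subtype (p := (· ∈ D)) _ (fun x ↦ by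
    rw [mem_filter_univ]
    exact hD.mem_iff.symm), sum_congr rfl fun c _ ↦ hterm c] at h
  simpa only [sub_neg_eq_add, ← sub_eq_add_neg] using h.symm

end Coset

end MacWilliams

section ShadowWeights

variable {D : Submodule (ZMod 2) (ι → ZMod 2)} {s : ι → ZMod 2}

lemma SelfDual2.two_pow_mul_I_pow_eq_card [Fintype D] (hD : SelfDual2 D)
    (hS : SinglyEven (D : Set (ι → ZMod 2))) (hs : s ∈ shadow (D : Set (ι → ZMod 2))) {N : ℕ}
    (hN : Fintype.card ι = 2 * N) :
    (2 : ℂ) ^ N * Complex.I ^ (hWt s + 3 * N) = Fintype.card D := by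
  have hterm (d : D) : (1 + Complex.I * 1) ^ hWt (s + d.1) *
      (1 - Complex.I * 1) ^ (Fintype.card ι - hWt (s + d.1)) =
        2 ^ N * Complex.I ^ (hWt s + 3 * N) := by
    have hadd : (1 + Complex.I) = Complex.I * (1 - Complex.I) := by
      linear_combination Complex.I_sq
    have hsq : (1 - Complex.I) ^ 2 = 2 * Complex.I ^ 3 := by
      linear_combination (1 - 2 * Complex.I) * Complex.I_sq
    have hmod : Complex.I ^ hWt (s + d.1) = Complex.I ^ hWt s := by
      rw [Complex.I_pow_eq_pow_mod, hD.hWt_shadow_add_modEq hS hs d.2, ← Complex.I_pow_eq_pow_mod]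
    rw [mul_one, hadd, mul_pow, mul_assoc, ← pow_add, Nat.add_sub_cancel' (hWt_le_card _), hN,
      pow_mul _ 2, hsq, mul_pow, hmod, pow_add, pow_mul _ 3]
    ring
  have h := hD.card_mul_sum_pow_hWt (y := 1) Complex.I_mul_I hS hs
  rw [sum_congr rfl fun d _ ↦ hterm d] at h
  simpa [Fintype.card_ne_zero] using h.symm

lemma SelfDual2.four_dvd_hWt_add (hD : SelfDual2 D)
    (hS : SinglyEven (D : Set (ι → ZMod 2))) (hs : s ∈ shadow (D : Set (ι → ZMod 2))) {N : ℕ}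
    (hN : Fintype.card ι = 2 * N) : 4 ∣ hWt s + 3 * N := by
  classical
  have := Fintype.ofFinite D
  have h := hD.two_pow_mul_I_pow_eq_card hS hs hN
  have hnorm : (2 : ℂ) ^ N = Fintype.card D := by
    have := congrArg (‖·‖) h
    simp only [norm_mul, norm_pow, Complex.norm_I, one_pow, mul_one, Complex.norm_ofNat,
      Complex.norm_natCast] at this
    exact_mod_cast this
  rw [← hnorm, mul_eq_left₀ (pow_ne_zero N two_ne_zero)] at h
  exact Complex.isPrimitiveRoot_I.dvd_of_pow_eq_one _ h

end ShadowWeights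

section BachocGaborit

open PowerSeries

variable {D : Submodule (ZMod 2) (ι → ZMod 2)}

lemma X_pow_dvd_sum_X_pow_hWt_sub_one {K : Type*} [CommRing K] [Fintype D] {n : ℕ}
    (hmin : ∀ c ∈ D, c ≠ 0 → n ≤ hWt c) : (X : K⟦X⟧) ^ n ∣ ∑ c : D, X ^ hWt c.1 - 1 := by
  classical
  rw [← add_sum_erase univ _ (mem_univ (0 : D)), ZeroMemClass.coe_zero, hWt_eq_hammingNorm,
    hammingNorm_zero, pow_zero, add_sub_cancel_left]
  refine dvd_sum fun c hc ↦ pow_dvd_pow X (hmin c c.2 ?_)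
  simpa using hc

lemma SelfDual2.hWt_shadow_add_le_card (hD : SelfDual2 D)
    (hS : SinglyEven (D : Set (ι → ZMod 2))) {m : ℕ}
    (hmin : ∀ x ∈ shadow (D : Set (ι → ZMod 2)), m ≤ hWt x) {s : ι → ZMod 2}
    (hs : s ∈ shadow (D : Set (ι → ZMod 2))) : hWt s + m ≤ Fintype.card ι := by
  have hcompl := hmin _ (hD.add_mem_shadow hS hs hD.one_mem)
  have := hWt_add_one s
  lia

lemma SelfDual2.coeff_inv_pow_mul_inv_pow_eq_zero (hD : SelfDual2 D)
    (hS : SinglyEven (D : Set (ι → ZMod 2))) {j M : ℕ}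
    (hcard : Fintype.card ι = 2 * (4 * j + 3 + M))
    (hmin : ∀ c ∈ D, c ≠ 0 → 2 * j + 3 ≤ hWt c)
    (hshadow : ∀ x ∈ shadow (D : Set (ι → ZMod 2)), M + 3 ≤ hWt x) :
    coeff (2 * j) ((1 + X ^ 2)⁻¹ ^ M * (1 - X ^ 2)⁻¹ ^ (2 * j + 2) : ℂ⟦X⟧) = 0 := by
  classical
  have := Fintype.ofFinite D
  obtain ⟨s, hs⟩ := hD.shadow_nonempty hS
  have hwt (d : D) : ∃ m ≤ 2 * j, hWt (s + d.1) + 4 * j = 4 * j + 3 + M + 4 * m := by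
    have hmem := hD.add_mem_shadow hS hs d.2
    have hmax := hD.hWt_shadow_add_le_card hS hshadow hmem
    have hdvd := hD.four_dvd_hWt_add hS hmem hcard
    obtain ⟨t, ht⟩ := Nat.exists_eq_add_of_le (hshadow _ hmem)
    obtain ⟨m, rfl⟩ : 4 ∣ t := by lia
    exact ⟨m, by lia, by lia⟩
  have : CharZero ℂ⟦X⟧ := charZero_of_injective_ringHom C_injective
  have hsum := hD.card_mul_sum_pow_hWt (I := C Complex.I) (y := (X : ℂ⟦X⟧))
    (C_mul_C_eq_neg_one Complex.I_mul_I) hS hs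
  rw [hcard, ← map_natCast (C (R := ℂ))] at hsum
  exact coeff_inv_pow_mul_inv_pow_eq_zero_of_sum_eq Complex.I_mul_I
    (Nat.cast_ne_zero.mpr Fintype.card_ne_zero) univ (fun d : D ↦ hWt (s + d.1)) rfl
    (X_pow_dvd_sum_X_pow_hWt_sub_one hmin) (fun d _ ↦ hwt d) hsum

end BachocGaborit

section LengthModTwentyFour

variable {D : Submodule (ZMod 2) (ι → ZMod 2)} {k : ℕ}

lemma minHam_eq {S : Set (ι → ZMod 2)} {x : ι → ZMod 2} (hx : x ∈ S) (hx0 : x ≠ 0)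
    (hmin : ∀ y ∈ S, y ≠ 0 → hWt x ≤ hWt y) : minHam S = hWt x := by
  refine IsLeast.csInf_eq ⟨⟨x, hx, hx0, rfl⟩, ?_⟩
  rintro _ ⟨y, hy, hy0, rfl⟩
  exact hmin y hy hy0

lemma ne_zero_of_mem_shadow {x : ι → ZMod 2}
    (hx : x ∈ shadow (D : Set (ι → ZMod 2))) : x ≠ 0 := by
  rintro rfl
  exact hx.2 D.zero_mem

lemma SelfDual2.hWt_shadow_mod_four (hD : SelfDual2 D) (hn : Fintype.card ι % 8 = 6)
    {x : ι → ZMod 2} (hx : x ∈ shadow (D : Set (ι → ZMod 2))) : hWt x % 4 = 3 := by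
  have hS := hD.singlyEven_of_not_four_dvd_card (by lia)
  have := hD.four_dvd_hWt_add hS hx (N := Fintype.card ι / 2) (by lia)
  lia

lemma SelfDual2.exists_shadow_hWt_le (hD : SelfDual2 D) (hcard : Fintype.card ι = 24 * k + 22)
    (hmin : ∀ c ∈ D, c ≠ 0 → 4 * k + 3 ≤ hWt c) :
    ∃ x ∈ shadow (D : Set (ι → ZMod 2)), hWt x ≤ 4 * k + 7 := by
  by_contra! hshadow
  refine coeff_one_add_inv_pow_add_six_mul_ne_zero (K := ℂ) (4 * k + 2) k ?_
  have hS := hD.singlyEven_of_not_four_dvd_card (by lia)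
  have h := hD.coeff_inv_pow_mul_inv_pow_eq_zero hS (j := 2 * k) (M := 4 * k + 8) (by lia)
    (fun c hc hc0 ↦ by have := hmin c hc hc0; lia) fun x hx ↦ by
      have := hshadow x hx
      have := hD.hWt_shadow_mod_four (by lia) hx
      lia
  rwa [show 2 * (2 * k) = 4 * k by ring] at h

lemma SelfDual2.exists_hWt_le (hD : SelfDual2 D) (hcard : Fintype.card ι = 24 * k + 22)
    (hshadow : ∀ x ∈ shadow (D : Set (ι → ZMod 2)), 4 * k + 3 ≤ hWt x) :
    ∃ c ∈ D, c ≠ 0 ∧ hWt c ≤ 4 * k + 6 := by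
  by_contra! hmin
  refine coeff_one_add_inv_pow_mul_add_six_ne_zero (K := ℂ) (4 * k) (k + 1) ?_
  have hS := hD.singlyEven_of_not_four_dvd_card (by lia)
  have h := hD.coeff_inv_pow_mul_inv_pow_eq_zero hS (j := 2 * k + 2) (M := 4 * k) (by lia)
    (fun c hc hc0 ↦ by have := hmin c hc hc0; lia) hshadow
  rwa [show 2 * (2 * k + 2) = 4 * (k + 1) by ring, show 4 * (k + 1) + 2 = 4 * k + 6 by ring] at h

lemma SelfDual2.minHam_shadow_eq (hD : SelfDual2 D) (hcard : Fintype.card ι = 24 * k + 22)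
    (hmin : ∀ c ∈ D, c ≠ 0 → 4 * k + 4 ≤ hWt c)
    (hshadow : ∀ x ∈ shadow (D : Set (ι → ZMod 2)), 4 * k + 4 ≤ hWt x) :
    minHam (shadow (D : Set (ι → ZMod 2))) = 4 * k + 7 := by
  have hge : ∀ x ∈ shadow (D : Set (ι → ZMod 2)), 4 * k + 7 ≤ hWt x := fun x hx ↦ by
    have := hshadow x hx
    have := hD.hWt_shadow_mod_four (by lia) hx
    lia
  obtain ⟨x, hx, hle⟩ :=
    hD.exists_shadow_hWt_le hcard fun c hc hc0 ↦ Nat.le_of_succ_le (hmin c hc hc0)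
  have hxwt : hWt x = 4 * k + 7 := hle.antisymm (hge x hx)
  rw [minHam_eq hx (ne_zero_of_mem_shadow hx) fun y hy _ ↦ hxwt ▸ hge y hy, hxwt]

lemma SelfDual2.minHam_eq_or_eq (hD : SelfDual2 D) (hcard : Fintype.card ι = 24 * k + 22)
    (hmin : ∀ c ∈ D, c ≠ 0 → 4 * k + 4 ≤ hWt c)
    (hshadow : ∀ x ∈ shadow (D : Set (ι → ZMod 2)), 4 * k + 3 ≤ hWt x) :
    minHam (D : Set (ι → ZMod 2)) = 4 * k + 4 ∨ minHam (D : Set (ι → ZMod 2)) = 4 * k + 6 := by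
  obtain ⟨b, hb, hb0, hble⟩ := hD.exists_hWt_le hcard hshadow
  obtain ⟨c, ⟨hc, hc0⟩, hleast⟩ : ∃ c, (c ∈ D ∧ c ≠ 0) ∧ ∀ y, y ∈ D ∧ y ≠ 0 → hWt c ≤ hWt y :=
    Set.exists_min_image {c | c ∈ D ∧ c ≠ 0} hWt (Set.toFinite _) ⟨b, hb, hb0⟩
  rw [minHam_eq (S := D) hc hc0 fun y hy hy0 ↦ hleast y ⟨hy, hy0⟩]
  have := hmin c hc hc0
  have := hleast b ⟨hb, hb0⟩
  have := hD.two_dvd_hWt hc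
  lia

theorem SelfDual2.sExtremal_and_minHam_eq (hD : SelfDual2 D)
    (hcard : Fintype.card ι = 24 * k + 22) (hmin : ∀ c ∈ D, c ≠ 0 → 4 * k + 4 ≤ hWt c)
    (hshadow : ∀ x ∈ shadow (D : Set (ι → ZMod 2)), 4 * k + 4 ≤ hWt x) :
    SExtremal D ∧
      (minHam (D : Set (ι → ZMod 2)) = 4 * k + 4 ∨ minHam (D : Set (ι → ZMod 2)) = 4 * k + 6) := by
  have hshadow_min := hD.minHam_shadow_eq hcard hmin hshadow
  have hD_min := hD.minHam_eq_or_eq hcard hmin fun x hx ↦ Nat.le_of_succ_le (hshadow x hx)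
  refine ⟨⟨hD, hD.singlyEven_of_not_four_dvd_card (by lia), ?_, ?_⟩, hD_min⟩ <;>
  · rw [hcard, hshadow_min]
    lia

end LengthModTwentyFour

end BinaryCodes

section QuaternaryCodes

variable {ι : Type*}

/-- The image of a binary vector under the map `a ↦ 2a` from `ZMod 2` to `ZMod 4` in each
coordinate. It turns words orthogonal to the residue code into codewords. -/
def double (v : ι → ZMod 2) : ι → ZMod 4 := fun i ↦ 2 * ((v i).val : ZMod 4)

lemma double_ne_zero {v : ι → ZMod 2} (hv : v ≠ 0) : double v ≠ 0 := by
  have eq_zero : ∀ a : ZMod 2, 2 * (a.val : ZMod 4) = 0 → a = 0 := by decide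
  exact fun h ↦ hv (funext fun i ↦ eq_zero (v i) (congrFun h i))

variable [Fintype ι]

lemma four_dvd_hWt_res2 {x : ι → ZMod 4} (hx : x ⬝ᵥ x = 0) : 4 ∣ hWt (res2 x) := by
  have val_castHom : ∀ a : ZMod 4,
      ((ZMod.castHom (by norm_num : 2 ∣ 4) (ZMod 2) a).val : ZMod 4) = a * a := by decide
  rw [← ZMod.natCast_eq_zero_iff, hWt_eq_sum_val, ← hx]
  simp only [res2, Nat.cast_sum, val_castHom, dotProduct]

lemma leeWt_double (v : ι → ZMod 2) : leeWt (double v) = 2 * hWt v := by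
  have leeVal_double : ∀ a : ZMod 2, leeVal (2 * (a.val : ZMod 4)) = 2 * a.val := by decide
  simp only [leeWt, double, leeVal_double, hWt_eq_sum_val, mul_sum]

lemma double_dotProduct (v : ι → ZMod 2) (y : ι → ZMod 4) :
    double v ⬝ᵥ y = 2 * (hWt (v * res2 y) : ZMod 4) := by
  have double_mul : ∀ (a : ZMod 2) (b : ZMod 4), 2 * (a.val : ZMod 4) * b =
      2 * ((a * ZMod.castHom (by norm_num : 2 ∣ 4) (ZMod 2) b).val : ZMod 4) := by decide
  simp only [dotProduct, double, double_mul, hWt_eq_sum_val, Pi.mul_apply, res2, Nat.cast_sum,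
    mul_sum]

section SelfDual

variable {C : Submodule (ZMod 4) (ι → ZMod 4)} {D : Submodule (ZMod 2) (ι → ZMod 2)}

lemma SelfDualZ4.double_mem (hC : SelfDualZ4 C) {v : ι → ZMod 2}
    (hv : v ∈ dual2 (residue (C : Set (ι → ZMod 4)))) : double v ∈ C := by
  refine (Set.ext_iff.mp hC (double v)).mpr fun y hy ↦ ?_
  have heven : 2 ∣ hWt (v * res2 y) := by
    rw [← ZMod.natCast_eq_zero_iff, natCast_hWt_mul]
    exact hv (res2 y) ⟨y, hy, rfl⟩
  calc
    double v ⬝ᵥ y = ((2 * hWt (v * res2 y) : ℕ) : ZMod 4) := by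
      rw [double_dotProduct, Nat.cast_mul, Nat.cast_ofNat]
    _ = 0 := (ZMod.natCast_eq_zero_iff _ 4).mpr (Nat.mul_dvd_mul_left 2 heven)

lemma SelfDualZ4.minLee_le_two_mul_hWt (hC : SelfDualZ4 C) {v : ι → ZMod 2} (hv0 : v ≠ 0)
    (hv : v ∈ dual2 (residue (C : Set (ι → ZMod 4)))) :
    minLee (C : Set (ι → ZMod 4)) ≤ 2 * hWt v :=
  Nat.sInf_le ⟨double v, hC.double_mem hv, double_ne_zero hv0, leeWt_double v⟩

lemma SelfDualZ4.residue_subset_evenSubcode (hC : SelfDualZ4 C)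
    (hres : residue (C : Set (ι → ZMod 4)) ⊆ D) :
    residue (C : Set (ι → ZMod 4)) ⊆ evenSubcode (D : Set (ι → ZMod 2)) := by
  rintro _ ⟨x, hx, rfl⟩
  exact ⟨hres ⟨x, hx, rfl⟩, four_dvd_hWt_res2 ((Set.ext_iff.mp hC x).mp hx x hx)⟩

lemma SelfDualZ4.minLee_le_two_mul_hWt_of_mem (hC : SelfDualZ4 C) (hD : SelfDual2 D)
    (hres : residue (C : Set (ι → ZMod 4)) ⊆ D) {c : ι → ZMod 2} (hc : c ∈ D) (hc0 : c ≠ 0) :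
    minLee (C : Set (ι → ZMod 4)) ≤ 2 * hWt c :=
  hC.minLee_le_two_mul_hWt hc0 fun y hy ↦ hD.mem_iff.mp hc y (hres hy)

lemma SelfDualZ4.minLee_le_two_mul_hWt_of_mem_shadow (hC : SelfDualZ4 C)
    (hres : residue (C : Set (ι → ZMod 4)) ⊆ D) {x : ι → ZMod 2}
    (hx : x ∈ shadow (D : Set (ι → ZMod 2))) :
    minLee (C : Set (ι → ZMod 4)) ≤ 2 * hWt x :=
  hC.minLee_le_two_mul_hWt (ne_zero_of_mem_shadow hx) fun y hy ↦
    hx.1 y (hC.residue_subset_evenSubcode hres hy)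

end SelfDual

end QuaternaryCodes

end Z4Note

open Z4Note in
theorem sextremal_of_residue_subset_length24k22_general
    {ι : Type*} [Fintype ι] {k : ℕ} (hcard : Fintype.card ι = 24 * k + 22)
    {C : Submodule (ZMod 4) (ι → ZMod 4)} (hC : SelfDualZ4 C)
    (hlee : 8 * k + 8 ≤ minLee (C : Set (ι → ZMod 4)))
    {D : Submodule (ZMod 2) (ι → ZMod 2)} (hD : SelfDual2 D)
    (hres : residue (C : Set (ι → ZMod 4)) ⊆ (D : Set (ι → ZMod 2))) :
    SExtremal D ∧
      (minHam (D : Set (ι → ZMod 2)) = 4 * k + 4 ∨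
       minHam (D : Set (ι → ZMod 2)) = 4 * k + 6) := by
  have hmin : ∀ c ∈ D, c ≠ 0 → 4 * k + 4 ≤ hWt c := fun c hc hc0 ↦ by
    have := hC.minLee_le_two_mul_hWt_of_mem hD hres hc hc0
    lia
  have hshadow : ∀ x ∈ shadow (D : Set (ι → ZMod 2)), 4 * k + 4 ≤ hWt x := fun x hx ↦ by
    have := hC.minLee_le_two_mul_hWt_of_mem_shadow hres hx
    lia
  exact hD.sExtremal_and_minHam_eq hcard hmin hshadow

open Z4Note in
/-- length `24k+22`, minimum Lee weight `8k+8`: any binary self-dual code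
containing the residue code is s-extremal with minimum weight `4k+4` or `4k+6`. -/
theorem sextremal_of_residue_subset_length24k22
    (k : ℕ) (hk : 0 < k)
    (C : Submodule (ZMod 4) (Fin (24 * k + 22) → ZMod 4))
    (hsd : SelfDualZ4 C)
    (hlee : minLee (C : Set (Fin (24 * k + 22) → ZMod 4)) = 8 * k + 8) :
    ∀ D : Submodule (ZMod 2) (Fin (24 * k + 22) → ZMod 2),
      SelfDual2 D →
      residue (C : Set (Fin (24 * k + 22) → ZMod 4)) ⊆
        (D : Set (Fin (24 * k + 22) → ZMod 2)) →
      SExtremal D ∧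
        (minHam (D : Set (Fin (24 * k + 22) → ZMod 2)) = 4 * k + 4 ∨
         minHam (D : Set (Fin (24 * k + 22) → ZMod 2)) = 4 * k + 6) := by
  intro D hD hres
  exact sextremal_of_residue_subset_length24k22_general (Fintype.card_fin _) hsd hlee.ge hD hres
end

section
/- The bordered double circulant Z4-code of length 24 determined by (α,β,γ) = (0,1,1) and circulant first row (1,3,1,0,3,3,0,3,2,2,2) is a self-dual Type I Z4-code with minimum Lee weight 10 and minimum Euclidean weight 12. -/
open Finset

/-!
Write the code as `{(u, uB)}`. Since `B Bᵀ = -1`, it is self-dual, so `4` divides all Euclidean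
weights; as these are at least the Lee weights, a minimum Lee weight of `10` forces Euclidean weight
at least `12`. A nonzero word of Lee weight at most `9` would have a half of Lee weight at most `4`.
Negating the indices of the circulant core turns `B` into `Bᵀ`, which allows the two halves to be
exchanged up to sign, so one may assume that `u` is that half. Cyclic shifts of the core preserve
`B`, so unless `u` is supported on the border its first core coordinate may be taken nonzero, and
after a sign change equal to `1` or `2`. The remaining finitely many `u` are enumerated.
-/

namespace Z4Note

open Matrix

section Weights

variable {ι κ : Type*} [Fintype ι] [Fintype κ]

theorem leeVal_neg (a : ZMod 4) : leeVal (-a) = leeVal a := by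
  revert a; decide

theorem leeVal_eq_zero {a : ZMod 4} : leeVal a = 0 ↔ a = 0 := by
  revert a; decide

theorem natCast_leeVal_sq (a : ZMod 4) : ((leeVal a ^ 2 : ℕ) : ZMod 4) = a * a := by
  revert a; decide

theorem leeWt_neg (x : ι → ZMod 4) : leeWt (-x) = leeWt x := by
  simp only [leeWt, Pi.neg_apply, leeVal_neg]

theorem leeWt_comp_equiv (x : ι → ZMod 4) (e : κ ≃ ι) : leeWt (x ∘ e) = leeWt x :=
  e.sum_comp fun i => leeVal (x i)

theorem leeWt_eq_inl_add_inr (x : ι ⊕ κ → ZMod 4) :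
    leeWt x = leeWt (x ∘ Sum.inl) + leeWt (x ∘ Sum.inr) :=
  Fintype.sum_sum_type _

theorem leeWt_eq_succAbove {n : ℕ} (i : Fin (n + 1)) (x : Fin (n + 1) → ZMod 4) :
    leeWt x = leeVal (x i) + leeWt fun j => x (i.succAbove j) :=
  Fin.sum_univ_succAbove _ i

theorem leeWt_le_eucWt (x : ι → ZMod 4) : leeWt x ≤ eucWt x :=
  Finset.sum_le_sum fun _ _ => Nat.le_self_pow two_ne_zero _

theorem natCast_eucWt (x : ι → ZMod 4) : (eucWt x : ZMod 4) = x ⬝ᵥ x := by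
  simp only [eucWt, Nat.cast_sum, natCast_leeVal_sq, dotProduct]

theorem SelfDualZ4.four_dvd_eucWt {C : Submodule (ZMod 4) (ι → ZMod 4)} (hC : SelfDualZ4 C)
    {x : ι → ZMod 4} (hx : x ∈ C) : 4 ∣ eucWt x := by
  have hx_dual : x ∈ dualZ4 (C : Set (ι → ZMod 4)) := hC ▸ hx
  rw [← ZMod.natCast_eq_zero_iff, natCast_eucWt]
  exact hx_dual x hx

end Weights

section SystematicCode

variable {R κ μ : Type*} [CommRing R] [Fintype κ]

theorem vecMul_comp_of_submatrix_eq {B : Matrix κ κ R} {e : Equiv.Perm κ}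
    (he : B.submatrix e e = B) (u : κ → R) : (u ∘ e) ᵥ* B = (u ᵥ* B) ∘ e := by
  conv_lhs => rw [← he, submatrix_vecMul_equiv]
  rw [Function.comp_assoc, Equiv.self_comp_symm, Function.comp_id]

theorem dotProduct_sumElim_vecMul [Fintype μ] (B : Matrix κ μ R) (x : κ ⊕ μ → R) (u : κ → R) :
    x ⬝ᵥ Sum.elim u (u ᵥ* B) = (x ∘ Sum.inl + B *ᵥ (x ∘ Sum.inr)) ⬝ᵥ u := by
  conv_lhs => rw [← Sum.elim_comp_inl_inr x, sumElim_dotProduct_sumElim]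
  rw [add_dotProduct, dotProduct_comm (x ∘ Sum.inr), dotProduct_comm (B *ᵥ _), dotProduct_mulVec]

variable [DecidableEq κ]

/-- The linear code generated by the rows of `(I | B)`; the coordinates of the two blocks are
indexed by the two summands of `κ ⊕ μ`. -/
def systematicCode (B : Matrix κ μ R) : Submodule R (κ ⊕ μ → R) :=
  Submodule.span R (Set.range fun i => Sum.elim (fun j => if j = i then 1 else 0) (B i))

theorem mem_systematicCode {B : Matrix κ μ R} {x : κ ⊕ μ → R} :
    x ∈ systematicCode B ↔ x ∘ Sum.inr = (x ∘ Sum.inl) ᵥ* B := by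
  have sum_rows (c : κ → R) :
      ∑ i, c i • Sum.elim (fun j => if j = i then 1 else 0) (B i) = Sum.elim c (c ᵥ* B) := by
    ext (k | k) <;> simp [vecMul, dotProduct]
  simp only [systematicCode, Submodule.mem_span_range_iff_exists_fun, sum_rows]
  constructor
  · rintro ⟨c, rfl⟩
    simp only [Sum.elim_comp_inl, Sum.elim_comp_inr]
  · intro hx
    exact ⟨x ∘ Sum.inl, hx ▸ Sum.elim_comp_inl_inr x⟩

theorem sumElim_vecMul_mem_systematicCode (B : Matrix κ μ R) (u : κ → R) :
    Sum.elim u (u ᵥ* B) ∈ systematicCode B :=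
  mem_systematicCode.2 rfl

theorem eq_vecMul_iff_of_mul_transpose {B : Matrix κ κ R} (hB : B * Bᵀ = -1) {u v : κ → R} :
    v = u ᵥ* B ↔ u + B *ᵥ v = 0 := by
  have hB' : Bᵀ * B = -1 := by
    rw [← neg_eq_iff_eq_neg, ← neg_mul, mul_eq_one_comm, mul_neg, hB, neg_neg]
  rw [add_eq_zero_iff_eq_neg]
  constructor
  · rintro rfl
    rw [← vecMul_transpose, vecMul_vecMul, hB, vecMul_neg, vecMul_one, neg_neg]
  · rintro rfl
    rw [neg_vecMul, ← vecMul_transpose, vecMul_vecMul, hB', vecMul_neg, vecMul_one, neg_neg]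

theorem selfDualZ4_systematicCode {B : Matrix κ κ (ZMod 4)} (hB : B * Bᵀ = -1) :
    SelfDualZ4 (systematicCode B) := by
  ext x
  rw [SetLike.mem_coe, mem_systematicCode, eq_vecMul_iff_of_mul_transpose hB]
  constructor
  · intro hx y hy
    rw [← Sum.elim_comp_inl_inr y, mem_systematicCode.1 hy]
    exact (dotProduct_sumElim_vecMul B x _).trans (by rw [hx, zero_dotProduct])
  · intro hx
    refine dotProduct_eq_zero _ fun u => ?_
    rw [← dotProduct_sumElim_vecMul]
    exact hx _ (sumElim_vecMul_mem_systematicCode B u)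

-- Up to `e` and a sign, this exchanges the two halves of the codewords of `systematicCode B`.
theorem vecMul_comp_symm_vecMul {B : Matrix κ κ R} (hB : B * Bᵀ = -1) {e : Equiv.Perm κ}
    (he : B.submatrix e e = Bᵀ) (u : κ → R) :
    ((u ᵥ* B) ∘ e.symm) ᵥ* B = (-u) ∘ e.symm := by
  have h : (((u ᵥ* B) ∘ e.symm) ᵥ* B) ∘ e = -u := by
    rw [← submatrix_vecMul_equiv, he, vecMul_vecMul, hB, vecMul_neg, vecMul_one]
  rw [← h, Function.comp_assoc, Equiv.self_comp_symm, Function.comp_id]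

theorem le_leeWt_of_mem_systematicCode {B : Matrix κ κ (ZMod 4)} (hB : B * Bᵀ = -1)
    {e : Equiv.Perm κ} (he : B.submatrix e e = Bᵀ) {d t : ℕ} (hd : d ≤ 2 * t + 2)
    (hball : ∀ u ≠ 0, leeWt u ≤ t → d ≤ leeWt u + leeWt (u ᵥ* B))
    {x : κ ⊕ κ → ZMod 4} (hx : x ∈ systematicCode B) (hx0 : x ≠ 0) : d ≤ leeWt x := by
  rw [mem_systematicCode] at hx
  have hleft : x ∘ Sum.inl ≠ 0 := by
    intro h
    apply hx0
    rw [← Sum.elim_comp_inl_inr x, hx, h, zero_vecMul, Sum.elim_zero_zero]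
  rw [leeWt_eq_inl_add_inr, hx]
  generalize x ∘ Sum.inl = u at hleft
  by_cases hu : leeWt u ≤ t
  · exact hball u hleft hu
  by_cases hv : leeWt (u ᵥ* B) ≤ t
  · have hswap := vecMul_comp_symm_vecMul hB he u
    have hright : (u ᵥ* B) ∘ e.symm ≠ 0 := by
      intro h
      rw [h, zero_vecMul, ← Pi.zero_comp e.symm, e.symm.surjective.right_cancellable] at hswap
      exact hleft (neg_eq_zero.1 hswap.symm)
    have := hball _ hright (by rwa [leeWt_comp_equiv])
    rwa [hswap, leeWt_comp_equiv, leeWt_comp_equiv, leeWt_neg, add_comm] at this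
  · omega

end SystematicCode

section LeeCombinations

variable {V : Type*}

/-- The pairs `(leeWt u, ∑ i, u i • v i)` for all coefficient vectors `u` of Lee weight at most `b`,
where `v` runs through the given list. Zero coefficients are skipped rather than multiplied out, so
that the list can be evaluated by the kernel. -/
def leeCombinations [Zero V] [Add V] [SMul (ZMod 4) V] : List V → ℕ → List (ℕ × V)
  | [], _ => [(0, 0)]
  | v :: l, b => leeCombinations l b ++
      ([1, 2, 3].filter (leeVal · ≤ b)).flatMap fun a : ZMod 4 =>
        (leeCombinations l (b - leeVal a)).map fun p => (leeVal a + p.1, a • v + p.2)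

theorem mem_leeCombinations [AddCommMonoid V] [Module (ZMod 4) V] {n : ℕ} (v : Fin n → V)
    {u : Fin n → ZMod 4} {b : ℕ} (hu : leeWt u ≤ b) :
    (leeWt u, ∑ i, u i • v i) ∈ leeCombinations (List.ofFn v) b := by
  induction n generalizing b with
  | zero => simp [leeCombinations, leeWt]
  | succ n ih =>
    have hwt : leeWt u = leeVal (u 0) + leeWt fun i : Fin n => u i.succ := leeWt_eq_succAbove 0 u
    rw [hwt, Fin.sum_univ_succ, List.ofFn_succ, leeCombinations, List.mem_append]
    by_cases h0 : u 0 = 0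
    · left
      simpa [h0, leeVal_eq_zero.2 rfl] using ih (fun i => v i.succ) (by omega)
    · right
      have hmem : u 0 ∈ ([1, 2, 3] : List (ZMod 4)) := by
        generalize u 0 = a at h0
        revert a; decide
      exact List.mem_flatMap.2 ⟨u 0, List.mem_filter.2 ⟨hmem, decide_eq_true (by omega)⟩,
        List.mem_map.2 ⟨_, ih _ (by omega), rfl⟩⟩

theorem le_leeWt_add_leeWt_vecMul_of_leeCombinations {κ : Type*} [Fintype κ] {n d t : ℕ}
    {B : Matrix (Fin (n + 1)) κ (ZMod 4)} {i : Fin (n + 1)} {u : Fin (n + 1) → ZMod 4}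
    (hu : leeWt u ≤ t)
    (hd : ∀ p ∈ leeCombinations (List.ofFn fun j => B (i.succAbove j)) (t - leeVal (u i)),
      d ≤ leeVal (u i) + p.1 + leeWt (u i • B i + p.2)) :
    d ≤ leeWt u + leeWt (u ᵥ* B) := by
  have hwt := leeWt_eq_succAbove i u
  rw [hwt, vecMul_eq_sum, Fin.sum_univ_succAbove _ i]
  exact hd _ (mem_leeCombinations _ (by omega))

end LeeCombinations

section BorderedCirculant

variable {m : ℕ} (α β γ : ZMod 4) (r : Fin m → ZMod 4)

/-- The matrix `B` of the generator matrix `(I | B)` of a bordered double circulant code. -/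
def bdcMatrix : Matrix (Fin (m + 1)) (Fin (m + 1)) (ZMod 4) :=
  Matrix.of (bdcB α β γ r)

theorem bdcCode_eq_systematicCode : bdcCode α β γ r = systematicCode (bdcMatrix α β γ r) :=
  rfl

/-- The permutation of the rows (or columns) of a bordered matrix that fixes the border and permutes
the core by `σ`. -/
def borderPerm (σ : Equiv.Perm (Fin m)) : Equiv.Perm (Fin (m + 1)) :=
  Equiv.Perm.decomposeFin.symm (0, σ)

theorem borderPerm_zero (σ : Equiv.Perm (Fin m)) : borderPerm σ 0 = 0 := by
  simp [borderPerm]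

theorem borderPerm_succ (σ : Equiv.Perm (Fin m)) (i : Fin m) :
    borderPerm σ i.succ = (σ i).succ := by
  simp [borderPerm]

theorem bdcMatrix_submatrix_shift [NeZero m] (c : Fin m) :
    (bdcMatrix α β γ r).submatrix (borderPerm (Equiv.addRight c)) (borderPerm (Equiv.addRight c)) =
      bdcMatrix α β γ r := by
  ext i j
  refine Fin.cases ?_ (fun i => ?_) i <;> refine Fin.cases ?_ (fun j => ?_) j <;>
    simp [borderPerm_zero, borderPerm_succ, bdcMatrix, bdcB, circEntry]

theorem bdcMatrix_submatrix_neg [NeZero m] :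
    (bdcMatrix α β β r).submatrix (borderPerm (Equiv.neg _)) (borderPerm (Equiv.neg _)) =
      (bdcMatrix α β β r)ᵀ := by
  ext i j
  refine Fin.cases ?_ (fun i => ?_) i <;> refine Fin.cases ?_ (fun j => ?_) j <;>
    simp [borderPerm_zero, borderPerm_succ, bdcMatrix, bdcB, circEntry, neg_add_eq_sub]

end BorderedCirculant

/-- The matrix `B` of the generator matrix `(I | B)` of the code `D_{24,1}`. -/
def matrixD24 : Matrix (Fin 12) (Fin 12) (ZMod 4) :=
  bdcMatrix 0 1 1 ![1, 3, 1, 0, 3, 3, 0, 3, 2, 2, 2]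

namespace matrixD24

theorem mul_transpose_eq_neg_one : matrixD24 * matrixD24ᵀ = -1 := by
  decide +kernel

theorem submatrix_shift (c : Fin 11) :
    matrixD24.submatrix (borderPerm (Equiv.addRight c)) (borderPerm (Equiv.addRight c)) =
      matrixD24 :=
  bdcMatrix_submatrix_shift _ _ _ _ c

theorem ten_le_of_mem_leeCombinations : ∀ a : ZMod 4, a = 1 ∨ a = 2 →
    ∀ p ∈ leeCombinations (List.ofFn fun i => matrixD24 (Fin.succAbove 1 i)) (4 - leeVal a),
      10 ≤ leeVal a + p.1 + leeWt (a • matrixD24 1 + p.2) := by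
  decide +kernel

theorem ten_le_of_apply_one_eq {u : Fin 12 → ZMod 4} (hu : leeWt u ≤ 4) (h : u 1 = 1 ∨ u 1 = 2) :
    10 ≤ leeWt u + leeWt (u ᵥ* matrixD24) :=
  le_leeWt_add_leeWt_vecMul_of_leeCombinations hu (ten_le_of_mem_leeCombinations (u 1) h)

theorem ten_le_of_apply_one_ne_zero {u : Fin 12 → ZMod 4} (hu : leeWt u ≤ 4) (h : u 1 ≠ 0) :
    10 ≤ leeWt u + leeWt (u ᵥ* matrixD24) := by
  have units : ∀ a : ZMod 4, a ≠ 0 → (a = 1 ∨ a = 2) ∨ -a = 1 := by decide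
  rcases units (u 1) h with h | h
  · exact ten_le_of_apply_one_eq hu h
  · simpa only [neg_vecMul, leeWt_neg] using
      ten_le_of_apply_one_eq (u := -u) (by rwa [leeWt_neg]) (Or.inl h)

theorem ten_le_leeWt_single_zero_vecMul :
    ∀ a : ZMod 4, a ≠ 0 → 10 ≤ leeWt (Pi.single 0 a ᵥ* matrixD24) := by
  decide +kernel

theorem ten_le_leeWt_add_leeWt_vecMul {u : Fin 12 → ZMod 4} (hu0 : u ≠ 0) (hu : leeWt u ≤ 4) :
    10 ≤ leeWt u + leeWt (u ᵥ* matrixD24) := by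
  by_cases hcore : ∃ i : Fin 11, u i.succ ≠ 0
  · obtain ⟨i, hi⟩ := hcore
    let e := borderPerm (Equiv.addRight i)
    have hei : (u ∘ e) 1 ≠ 0 := by
      have : e 1 = i.succ := (borderPerm_succ _ 0).trans (congrArg _ (zero_add i))
      rwa [Function.comp_apply, this]
    have := ten_le_of_apply_one_ne_zero (by rwa [leeWt_comp_equiv]) hei
    rwa [vecMul_comp_of_submatrix_eq (submatrix_shift i), leeWt_comp_equiv,
      leeWt_comp_equiv] at this
  · push Not at hcore
    have hsingle : u = Pi.single 0 (u 0) := by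
      ext i
      refine Fin.cases ?_ (fun i => ?_) i <;> simp [hcore]
    have h0 : u 0 ≠ 0 := fun h => hu0 (by rw [hsingle, h, Pi.single_zero])
    rw [hsingle]
    exact le_add_left (ten_le_leeWt_single_zero_vecMul _ h0)

theorem ten_le_leeWt {x : Fin 12 ⊕ Fin 12 → ZMod 4} (hx : x ∈ systematicCode matrixD24)
    (hx0 : x ≠ 0) : 10 ≤ leeWt x :=
  le_leeWt_of_mem_systematicCode (t := 4) mul_transpose_eq_neg_one
    (bdcMatrix_submatrix_neg _ _ _) le_rfl (fun _ => ten_le_leeWt_add_leeWt_vecMul) hx hx0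

theorem twelve_le_eucWt {x : Fin 12 ⊕ Fin 12 → ZMod 4} (hx : x ∈ systematicCode matrixD24)
    (hx0 : x ≠ 0) : 12 ≤ eucWt x := by
  have h10 : 10 ≤ eucWt x := (ten_le_leeWt hx hx0).trans (leeWt_le_eucWt x)
  have h4 : 4 ∣ eucWt x := (selfDualZ4_systematicCode mul_transpose_eq_neg_one).four_dvd_eucWt hx
  omega

theorem exists_leeWt_eq_ten : ∃ x ∈ systematicCode matrixD24, x ≠ 0 ∧ leeWt x = 10 :=
  ⟨_, sumElim_vecMul_mem_systematicCode matrixD24 (Pi.single 1 2 + Pi.single 4 1),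
    by decide +kernel, by decide +kernel⟩

theorem exists_eucWt_eq_twelve : ∃ x ∈ systematicCode matrixD24, x ≠ 0 ∧ eucWt x = 12 :=
  ⟨_, sumElim_vecMul_mem_systematicCode matrixD24 (Pi.single 0 1),
    by decide +kernel, by decide +kernel⟩

end matrixD24

end Z4Note

open Z4Note in
/-- the bordered double circulant code `D_{24,1}` is a self-dual Type I
`ZMod 4`-code with minimum Lee weight 10 and minimum Euclidean weight 12. -/
theorem bdc_code_D24_1_properties :
    let D : Submodule (ZMod 4) ((Fin 12 ⊕ Fin 12) → ZMod 4) :=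
      bdcCode 0 1 1 ![1,3,1,0,3,3,0,3,2,2,2]
    SelfDualZ4 D ∧ ¬ TypeII (D : Set ((Fin 12 ⊕ Fin 12) → ZMod 4)) ∧
    minLee (D : Set ((Fin 12 ⊕ Fin 12) → ZMod 4)) = 10 ∧
    minEuc (D : Set ((Fin 12 ⊕ Fin 12) → ZMod 4)) = 12 := by
  intro D
  have hD : D = systematicCode matrixD24 := bdcCode_eq_systematicCode _ _ _ _
  rw [hD]
  refine ⟨selfDualZ4_systematicCode matrixD24.mul_transpose_eq_neg_one, ?_,
    IsLeast.csInf_eq ⟨matrixD24.exists_leeWt_eq_ten, ?_⟩,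
    IsLeast.csInf_eq ⟨matrixD24.exists_eucWt_eq_twelve, ?_⟩⟩
  · intro hII
    obtain ⟨x, hx, -, hwt⟩ := matrixD24.exists_eucWt_eq_twelve
    have h8 : 8 ∣ 12 := hwt ▸ hII x hx
    omega
  · rintro _ ⟨x, hx, hx0, rfl⟩
    exact matrixD24.ten_le_leeWt hx hx0
  · rintro _ ⟨x, hx, hx0, rfl⟩
    exact matrixD24.twelve_le_eucWt hx hx0
end
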